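/- Let T = {1342, 2413, 3412} (patterns of length 4). Then the generating function for T-avoiders satisfies, as formal power series over ℚ, ((x^2-3x+1)·(2x^2-2x+1) - x·(1-2x)·(1-x)·C(x))·(F_T(x) - 1) = x·(1-x)^2·(1-2x), where C(x) is the Catalan number generating function; that is, F_T(x) = 1 + x(1-x)^2(1-2x)/((x^2-3x+1)(2x^2-2x+1) - x(1-2x)(1-x)C(x)). -/

import Mathlib

open PowerSeries

/-- A permutation `π` of `{0,…,n-1}` contains the pattern `σ` (of length `k`) if there is an
order-embedding of positions on which the values of `π` appear in the same relative order as
the values of `σ`. -/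
def ContainsPattern {n k : ℕ} (π : Equiv.Perm (Fin n)) (σ : Fin k → Fin k) : Prop :=
  ∃ f : Fin k ↪o Fin n, ∀ a b : Fin k, σ a < σ b ↔ π (f a) < π (f b)

/-- The number of permutations of length `n` avoiding every pattern in `T`. -/
noncomputable def avoiderCount (T : Set (Fin 4 → Fin 4)) (n : ℕ) : ℕ :=
  Nat.card {π : Equiv.Perm (Fin n) // ∀ σ ∈ T, ¬ ContainsPattern π σ}

/-- The generating function `F_T(x) = ∑_n |S_n(T)| xⁿ` over `ℚ`. -/
noncomputable def avoiderGF (T : Set (Fin 4 → Fin 4)) : PowerSeries ℚ :=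
  PowerSeries.mk fun n => (avoiderCount T n : ℚ)

/-- The generating function of the Catalan numbers over `ℚ`. -/
noncomputable def catalanGF : PowerSeries ℚ :=
  PowerSeries.mk fun n => (catalan n : ℚ)

def Av (l : List ℕ) : Prop := ∀ a b c d, [a,b,c,d].Sublist l →
  ¬ (a < d ∧ d < b ∧ b < c) ∧ ¬ (c < a ∧ a < d ∧ d < b) ∧ ¬ (c < d ∧ d < a ∧ a < b)
def A231 (l : List ℕ) : Prop := ∀ a b c, [a,b,c].Sublist l → ¬ (c < a ∧ a < b)

lemma sub2_append {a b : ℕ} {X Y : List ℕ} : [a,b].Sublist (X ++ Y) ↔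
    [a,b].Sublist Y ∨ (a ∈ X ∧ b ∈ Y) ∨ [a,b].Sublist X := by
  rw [List.sublist_append_iff]
  constructor
  · rintro ⟨l₁, l₂, h, h1, h2⟩
    simp only [List.cons_eq_append_iff, List.nil_eq_append_iff] at h
    rcases h with ⟨rfl, rfl⟩ | ⟨_, rfl, ⟨rfl, rfl⟩ | ⟨_, rfl, rfl, rfl⟩⟩ <;> simp_all
  · rintro (h | h | h)
    · exact ⟨[], _, rfl, by simp, h⟩
    · exact ⟨[a], [b], rfl, by simpa using h.1, by simpa using h.2⟩
    · exact ⟨[a,b], [], rfl, h, by simp⟩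

lemma sub3_append {a b c : ℕ} {X Y : List ℕ} : [a,b,c].Sublist (X ++ Y) ↔
    [a,b,c].Sublist Y ∨ (a ∈ X ∧ [b,c].Sublist Y) ∨ ([a,b].Sublist X ∧ c ∈ Y) ∨ [a,b,c].Sublist X := by
  rw [List.sublist_append_iff]
  constructor
  · rintro ⟨l₁, l₂, h, h1, h2⟩
    simp only [List.cons_eq_append_iff, List.nil_eq_append_iff] at h
    rcases h with ⟨rfl, rfl⟩ | ⟨_, rfl, ⟨rfl, rfl⟩ | ⟨_, rfl, ⟨rfl, rfl⟩ | ⟨_, rfl, rfl, rfl⟩⟩⟩ <;> simp_all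
  · rintro (h | h | h | h)
    · exact ⟨[], _, rfl, by simp, h⟩
    · exact ⟨[a], [b,c], rfl, by simpa using h.1, by simpa using h.2⟩
    · exact ⟨[a,b], [c], rfl, by simpa using h.1, by simpa using h.2⟩
    · exact ⟨[a,b,c], [], rfl, h, by simp⟩

lemma sub4_append {a b c d : ℕ} {X Y : List ℕ} : [a,b,c,d].Sublist (X ++ Y) ↔
    [a,b,c,d].Sublist Y ∨ (a ∈ X ∧ [b,c,d].Sublist Y) ∨ ([a,b].Sublist X ∧ [c,d].Sublist Y) ∨
    ([a,b,c].Sublist X ∧ d ∈ Y) ∨ [a,b,c,d].Sublist X := by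
  rw [List.sublist_append_iff]
  constructor
  · rintro ⟨l₁, l₂, h, h1, h2⟩
    simp only [List.cons_eq_append_iff, List.nil_eq_append_iff] at h
    rcases h with ⟨rfl, rfl⟩ | ⟨_, rfl, ⟨rfl, rfl⟩ | ⟨_, rfl, ⟨rfl, rfl⟩ | ⟨_, rfl, ⟨rfl, rfl⟩ | ⟨_, rfl, rfl, rfl⟩⟩⟩⟩ <;> simp_all
  · rintro (h | h | h | h | h)
    · exact ⟨[], _, rfl, by simp, h⟩
    · exact ⟨[a], [b,c,d], rfl, by simpa using h.1, by simpa using h.2⟩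
    · exact ⟨[a,b], [c,d], rfl, by simpa using h.1, by simpa using h.2⟩
    · exact ⟨[a,b,c], [d], rfl, by simpa using h.1, by simpa using h.2⟩
    · exact ⟨[a,b,c,d], [], rfl, h, by simp⟩

lemma sub2_cons {a b n : ℕ} {Y : List ℕ} : [a,b].Sublist (n :: Y) ↔
    [a,b].Sublist Y ∨ (a = n ∧ b ∈ Y) := by
  have := @sub2_append a b [n] Y
  simpa using this
lemma sub3_cons {a b c n : ℕ} {Y : List ℕ} : [a,b,c].Sublist (n :: Y) ↔
    [a,b,c].Sublist Y ∨ (a = n ∧ [b,c].Sublist Y) := by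
  have := @sub3_append a b c [n] Y
  simpa using this
lemma sub4_cons {a b c d n : ℕ} {Y : List ℕ} : [a,b,c,d].Sublist (n :: Y) ↔
    [a,b,c,d].Sublist Y ∨ (a = n ∧ [b,c,d].Sublist Y) := by
  have := @sub4_append a b c d [n] Y
  simpa using this

lemma Av.sub {l m : List ℕ} (h : Av l) (hs : m.Sublist l) : Av m :=
  fun a b c d H => h a b c d (H.trans hs)
lemma A231.sub {l m : List ℕ} (h : A231 l) (hs : m.Sublist l) : A231 m :=
  fun a b c H => h a b c (H.trans hs)

lemma Av_map {l : List ℕ} {f : ℕ → ℕ} (hf : StrictMono f) : Av (l.map f) ↔ Av l := by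
  constructor
  · intro h a b c d H
    have := h _ _ _ _ (by simpa using H.map f)
    simpa [hf.lt_iff_lt] using this
  · intro h a b c d H
    obtain ⟨m, hm, e⟩ := List.sublist_map_iff.1 H
    replace e := e.symm
    simp only [List.map_eq_cons_iff, List.map_eq_nil_iff] at e
    obtain ⟨a, _, rfl, rfl, b, _, rfl, rfl, c, _, rfl, rfl, d, _, rfl, rfl, rfl⟩ := e
    simpa [hf.lt_iff_lt] using h _ _ _ _ hm

lemma A231_map {l : List ℕ} {f : ℕ → ℕ} (hf : StrictMono f) : A231 (l.map f) ↔ A231 l := by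
  constructor
  · intro h a b c H
    have := h _ _ _ (by simpa using H.map f)
    simpa [hf.lt_iff_lt] using this
  · intro h a b c H
    obtain ⟨m, hm, e⟩ := List.sublist_map_iff.1 H
    replace e := e.symm
    simp only [List.map_eq_cons_iff, List.map_eq_nil_iff] at e
    obtain ⟨a, _, rfl, rfl, b, _, rfl, rfl, c, _, rfl, rfl, rfl⟩ := e
    simpa [hf.lt_iff_lt] using h _ _ _ hm

noncomputable def Pm (n : ℕ) : Finset (List ℕ) := (List.range n).permutations.toFinset
lemma mem_Pm {n : ℕ} {l : List ℕ} : l ∈ Pm n ↔ l.Nodup ∧ ∀ x, x ∈ l ↔ x < n := by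
  simp only [Pm, List.mem_toFinset, List.mem_permutations]
  constructor
  · intro h
    exact ⟨h.nodup_iff.2 List.nodup_range, fun x => by rw [h.mem_iff, List.mem_range]⟩
  · rintro ⟨h, h2⟩
    exact (List.perm_ext_iff_of_nodup h List.nodup_range).2 (by simpa using h2)
lemma len_Pm {n : ℕ} {l : List ℕ} (h : l ∈ Pm n) : l.length = n := by
  simp only [Pm, List.mem_toFinset, List.mem_permutations] at h
  simpa using h.length_eq
lemma card_Pm (n : ℕ) : (Pm n).card = n.factorial := by
  rw [Pm, List.toFinset_card_of_nodup (List.nodup_permutations _ List.nodup_range),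
    List.length_permutations, List.length_range]

lemma lower_Pm {l : List ℕ} (h : l.Nodup) (h2 : ∀ x ∈ l, ∀ y < x, y ∈ l) : l ∈ Pm l.length := by
  rw [mem_Pm]
  refine ⟨h, ?_⟩
  have h3 : IsLowerSet (l.toFinset : Set ℕ) := by
    intro x y hxy hx
    rcases hxy.eq_or_lt with rfl | hlt
    · exact hx
    · simpa using h2 x (by simpa using hx) y hlt
  have h5 : l.toFinset = Finset.range l.length := by
    have hc : l.toFinset.card = l.length := List.toFinset_card_of_nodup h
    symm
    apply Finset.eq_of_subset_of_card_le _ (by simp [hc])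
    intro y hy
    by_contra hn
    have : l.toFinset ⊆ Finset.range y := by
      intro x hx
      by_contra hx'
      simp only [Finset.mem_range, not_lt] at hx'
      exact hn (h3 hx' hx)
    have := Finset.card_le_card this
    simp only [Finset.mem_range, Finset.card_range] at *
    omega
  intro x
  rw [← List.mem_toFinset, h5, Finset.mem_range]

lemma split_Pm {n : ℕ} {L R : List ℕ} (h : L ++ n :: R ∈ Pm (n+1))
    (hlt : ∀ x ∈ L, ∀ y ∈ R, x < y) :
    ∃ i j R', i + j = n ∧ L ∈ Pm i ∧ R' ∈ Pm j ∧ R = R'.map (· + i) := by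
  have hlen := len_Pm h
  rw [mem_Pm] at h
  obtain ⟨hnd, hm⟩ := h
  rw [List.nodup_append, List.nodup_cons] at hnd
  obtain ⟨hL, ⟨hnR, hR⟩, hd⟩ := hnd
  have hLn : ∀ x ∈ L, x < n := fun x hx => by
    have h1 := (hm x).1 (by simp [hx])
    have h2 := hd x hx n (by simp)
    omega
  have hRn : ∀ x ∈ R, x < n := fun x hx => by
    have h1 := (hm x).1 (by simp [hx])
    have h2 : x ≠ n := fun e => hnR (e ▸ hx)
    omega
  have hLP : L ∈ Pm L.length := by
    apply lower_Pm hL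
    intro x hx y hy
    have h1 := hLn x hx
    have h2 := (hm y).2 (by omega)
    simp only [List.mem_append, List.mem_cons] at h2
    rcases h2 with h2 | h2 | h2
    · exact h2
    · omega
    · have := hlt x hx y h2
      omega
  have hRge : ∀ y ∈ R, L.length ≤ y := by
    intro y hy
    by_contra hc
    have := ((mem_Pm.1 hLP).2 y).2 (by omega)
    exact lt_irrefl _ (hlt y this y hy)
  simp only [List.length_append, List.length_cons] at hlen
  have hRe : R = (R.map (· - L.length)).map (· + L.length) := by
    rw [List.map_map]
    conv_lhs => rw [← List.map_id R]
    apply List.map_congr_left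
    intro y hy
    have := hRge y hy
    simp only [Function.comp, id]
    omega
  refine ⟨L.length, R.length, R.map (· - L.length), by omega, hLP, ?_, hRe⟩
  have hnd' : (R.map (· - L.length)).Nodup := by
    apply List.Nodup.of_map (· + L.length)
    rw [← hRe]
    exact hR
  rw [mem_Pm]
  refine ⟨hnd', fun x => ?_⟩
  simp only [List.mem_map]
  constructor
  · rintro ⟨y, hy, rfl⟩
    have := hRge y hy
    have := hRn y hy
    omega
  · intro hx
    refine ⟨x + L.length, ?_, by omega⟩
    have h2 := (hm (x + L.length)).2 (by omega)
    simp only [List.mem_append, List.mem_cons] at h2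
    rcases h2 with h2 | h2 | h2
    · have := ((mem_Pm.1 hLP).2 _).1 h2
      omega
    · omega
    · exact h2

lemma glue_Pm {i j : ℕ} {L R : List ℕ} (hL : L ∈ Pm i) (hR : R ∈ Pm j) :
    L ++ (i+j) :: R.map (· + i) ∈ Pm (i+j+1) := by
  rw [mem_Pm] at *
  obtain ⟨h1, h2⟩ := hL
  obtain ⟨h3, h4⟩ := hR
  constructor
  · rw [List.nodup_append, List.nodup_cons]
    refine ⟨h1, ⟨?_, h3.map (fun a b h => by simpa using h)⟩, ?_⟩
    · simp only [List.mem_map, not_exists, not_and]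
      intro x hx
      have := (h4 x).1 hx
      omega
    · intro a ha b hb
      have := (h2 a).1 ha
      simp only [List.mem_map, List.mem_cons] at hb
      rcases hb with rfl | ⟨x, hx, rfl⟩ <;> omega
  · intro x
    simp only [List.mem_append, List.mem_cons, List.mem_map, h2, h4]
    constructor
    · rintro (h | h | ⟨y, hy, rfl⟩) <;> omega
    · intro h
      by_cases h5 : x < i
      · exact Or.inl h5
      · by_cases h6 : x = i + j
        · exact Or.inr (Or.inl h6)
        · exact Or.inr (Or.inr ⟨x - i, by omega, by omega⟩)

noncomputable def Glue (X Y : ℕ → Finset (List ℕ)) (n : ℕ) : Finset (List ℕ) :=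
  ((Finset.HasAntidiagonal.antidiagonal n).sigma (fun p => X p.1 ×ˢ Y p.2)).image
    (fun s => s.2.1 ++ n :: s.2.2.map (· + s.1.1))

lemma mem_Glue {X Y : ℕ → Finset (List ℕ)} {n : ℕ} {l : List ℕ} : l ∈ Glue X Y n ↔
    ∃ i j L R, i + j = n ∧ L ∈ X i ∧ R ∈ Y j ∧ l = L ++ n :: R.map (· + i) := by
  simp only [Glue, Finset.mem_image, Finset.mem_sigma, Finset.HasAntidiagonal.mem_antidiagonal,
    Finset.mem_product]
  constructor
  · rintro ⟨⟨⟨i, j⟩, ⟨L, R⟩⟩, ⟨h1, h2, h3⟩, rfl⟩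
    exact ⟨i, j, L, R, h1, h2, h3, rfl⟩
  · rintro ⟨i, j, L, R, h1, h2, h3, rfl⟩
    exact ⟨⟨⟨i, j⟩, ⟨L, R⟩⟩, ⟨h1, h2, h3⟩, rfl⟩

lemma card_Glue {X Y : ℕ → Finset (List ℕ)} (hX : ∀ i, X i ⊆ Pm i) (hY : ∀ i, Y i ⊆ Pm i)
    (n : ℕ) : (Glue X Y n).card = ∑ p ∈ Finset.HasAntidiagonal.antidiagonal n, (X p.1).card * (Y p.2).card := by
  rw [Glue, Finset.card_image_of_injOn, Finset.card_sigma]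
  · simp
  · rintro ⟨⟨i, j⟩, ⟨L, R⟩⟩ h1 ⟨⟨i', j'⟩, ⟨L', R'⟩⟩ h2 h
    simp only [Finset.coe_sigma, Set.mem_sigma_iff, Finset.mem_coe, Finset.HasAntidiagonal.mem_antidiagonal,
      Finset.mem_product] at h1 h2 h
    obtain ⟨e1, a1, b1⟩ := h1
    obtain ⟨e2, a2, b2⟩ := h2
    have m1 := mem_Pm.1 (hX _ a1)
    have m2 := mem_Pm.1 (hX _ a2)
    have m3 := mem_Pm.1 (hY _ b1)
    have m4 := mem_Pm.1 (hY _ b2)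
    have hL : n ∉ L := by rw [m1.2]; omega
    have hL' : n ∉ L' := by rw [m2.2]; omega
    have hR : n ∉ R.map (· + i) := by
      simp only [List.mem_map, m3.2, not_exists, not_and]; omega
    have hR' : n ∉ R'.map (· + i') := by
      simp only [List.mem_map, m4.2, not_exists, not_and]; omega
    obtain ⟨rfl, -, h3⟩ := (List.append_cons_inj_of_notMem hL hR).1 h
    have l1 := len_Pm (hX _ a1)
    have l2 := len_Pm (hX _ a2)
    have hi : i = i' := by rw [← l1, ← l2]
    subst hi
    have hj : j = j' := by omega
    subst hj
    have : R = R' := List.map_injective_iff.2 (fun a b h => by simpa using h) h3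
    subst this
    rfl

open Classical in
noncomputable def CF (n : ℕ) : Finset (List ℕ) := (Pm n).filter A231
open Classical in
noncomputable def AF (n : ℕ) : Finset (List ℕ) := (Pm n).filter Av

lemma mem_CF {n l} : l ∈ CF n ↔ l ∈ Pm n ∧ A231 l := by simp [CF]
lemma mem_AF {n l} : l ∈ AF n ↔ l ∈ Pm n ∧ Av l := by simp [AF]

lemma addmono (i : ℕ) : StrictMono (fun x : ℕ => x + i) := fun a b h => by simpa using h

lemma CF_succ (n : ℕ) : CF (n+1) = Glue CF CF n := by
  ext l
  rw [mem_CF, mem_Glue]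
  constructor
  · rintro ⟨h1, h2⟩
    have hn : n ∈ l := ((mem_Pm.1 h1).2 n).2 (by omega)
    obtain ⟨L, R, rfl⟩ := List.append_of_mem hn
    have hnd := (mem_Pm.1 h1).1
    have hm := (mem_Pm.1 h1).2
    rw [List.nodup_append, List.nodup_cons] at hnd
    obtain ⟨hL, ⟨hnR, hR⟩, hd⟩ := hnd
    obtain ⟨i, j, R', e, hLP, hRP, rfl⟩ := split_Pm h1 (by
      intro x hx y hy
      by_contra hc
      have q1 := h2 x n y (by simp [sub3_append, hx, hy])
      have q2 := hd x hx y (by simp [hy])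
      have q3 := hd x hx n (by simp)
      have q4 := (hm x).1 (by simp [hx])
      omega)
    refine ⟨i, j, L, R', e, mem_CF.2 ⟨hLP, h2.sub (by simp)⟩, mem_CF.2 ⟨hRP, ?_⟩, rfl⟩
    rw [← A231_map (addmono i)]
    exact h2.sub ((List.sublist_cons_self _ _).trans (List.sublist_append_right _ _))
  · rintro ⟨i, j, L, R, rfl, h1, h2, rfl⟩
    rw [mem_CF] at h1 h2
    refine ⟨glue_Pm h1.1 h2.1, ?_⟩
    have hLi : ∀ x ∈ L, x < i := fun x hx => ((mem_Pm.1 h1.1).2 x).1 hx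
    have hRi : ∀ x ∈ R.map (· + i), i ≤ x ∧ x < i + j := fun x hx => by
      simp only [List.mem_map, (mem_Pm.1 h2.1).2] at hx
      omega
    have hA := (A231_map (addmono i)).2 h2.2
    generalize R.map (· + i) = S at *
    intro a b c H
    have hA' := hA a b c
    have hB' := h1.2 a b c
    have r1 := hLi a
    have r2 := hLi b
    have r3 := hRi b
    have r4 := hRi c
    rw [sub3_append, sub3_cons, sub2_cons, List.mem_cons] at H
    have s2 : ∀ {a b : ℕ} {l : List ℕ}, [a,b].Sublist l → a ∈ l ∧ b ∈ l := fun h =>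
      ⟨h.subset (by simp), h.subset (by simp)⟩
    rcases H with (H | H) | (⟨H1, H | H⟩) | ⟨H1, H | H⟩ | H
    · exact hA' H
    · have := r3 (s2 H.2).1
      have := r4 (s2 H.2).2
      omega
    · have := r1 H1
      have := r4 (s2 H).2
      omega
    · have := r1 H1
      have := r4 H.2
      omega
    · have := r1 (s2 H1).1
      omega
    · have := r1 (s2 H1).1
      have := r4 H
      omega
    · exact hB' H

lemma card_CF (n : ℕ) : (CF n).card = catalan n := by
  induction n using Nat.strong_induction_on with
  | _ n ih =>
    cases n with
    | zero =>
      rw [catalan_zero, Finset.card_eq_one]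
      refine ⟨[], ?_⟩
      ext l
      rw [mem_CF, Finset.mem_singleton]
      constructor
      · intro h
        simpa using len_Pm h.1
      · rintro rfl
        exact ⟨by simp [mem_Pm], fun a b c h => by simp at h⟩
    | succ n =>
      rw [CF_succ, card_Glue (fun i l h => (mem_CF.1 h).1) (fun i l h => (mem_CF.1 h).1),
        catalan_succ']
      apply Finset.sum_congr rfl
      rintro ⟨i, j⟩ h
      rw [Finset.HasAntidiagonal.mem_antidiagonal] at h
      simp only at h ⊢
      rw [ih i (by omega), ih j (by omega)]

lemma s2 {a b : ℕ} {l : List ℕ} (h : [a,b].Sublist l) : a ∈ l ∧ b ∈ l :=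
  ⟨h.subset (by simp), h.subset (by simp)⟩
lemma s3 {a b c : ℕ} {l : List ℕ} (h : [a,b,c].Sublist l) : a ∈ l ∧ b ∈ l ∧ c ∈ l :=
  ⟨h.subset (by simp), h.subset (by simp), h.subset (by simp)⟩
lemma s4 {a b c d : ℕ} {l : List ℕ} (h : [a,b,c,d].Sublist l) : a ∈ l ∧ b ∈ l ∧ c ∈ l ∧ d ∈ l :=
  ⟨h.subset (by simp), h.subset (by simp), h.subset (by simp), h.subset (by simp)⟩

lemma Av_cons {n : ℕ} {R : List ℕ} (h : ∀ x ∈ R, x < n) (hR : Av R) : Av (n :: R) := by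
  intro a b c d H
  rw [sub4_cons] at H
  rcases H with H | ⟨rfl, H⟩
  · exact hR _ _ _ _ H
  · obtain ⟨h1, h2, h3⟩ := s3 H
    have := h _ h1
    have := h _ h2
    have := h _ h3
    omega

lemma Av_snoc {R : List ℕ} (hR : Av R) : Av (R ++ [0]) := by
  intro a b c d H
  rw [sub4_append] at H
  rcases H with H | ⟨_, H⟩ | ⟨_, H⟩ | ⟨_, H⟩ | H
  · simpa using H.length_le
  · simpa using H.length_le
  · simpa using H.length_le
  · simp only [List.mem_singleton] at H
    omega
  · exact hR _ _ _ _ H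

lemma Av_glue {n i : ℕ} {L S : List ℕ} (hin : i ≤ n) (hLi : ∀ x ∈ L, x < i) (hSi : ∀ x ∈ S, i ≤ x ∧ x < n)
    (hL : Av L) (hS : A231 S) : Av (L ++ n :: S) := by
  intro a b c d H
  rw [sub4_append] at H
  rcases H with H | ⟨h1, H⟩ | ⟨h1, H⟩ | ⟨h1, H⟩ | H
  · rw [sub4_cons] at H
    rcases H with H | ⟨rfl, H⟩
    · have q1 := hS a b c (.trans (by simp) H)
      have q2 := hS b c d (.trans (by simp) H)
      have q3 := hS a b d (.trans (by simp) H)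
      omega
    · obtain ⟨h1, h2, h3⟩ := s3 H
      have := hSi _ h1
      have := hSi _ h2
      have := hSi _ h3
      omega
  · rw [sub3_cons] at H
    have := hLi _ h1
    rcases H with H | ⟨rfl, H⟩
    · have q2 := hS b c d H
      obtain ⟨h1, h2, h3⟩ := s3 H
      have := hSi _ h1
      have := hSi _ h2
      have := hSi _ h3
      omega
    · obtain ⟨h2, h3⟩ := s2 H
      have := hSi _ h2
      have := hSi _ h3
      omega
  · obtain ⟨h3, h4⟩ := s2 h1
    have := hLi _ h3
    have := hLi _ h4
    rw [sub2_cons] at H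
    rcases H with H | ⟨rfl, H⟩
    · obtain ⟨h2, h3⟩ := s2 H
      have := hSi _ h2
      have := hSi _ h3
      omega
    · have := hSi _ H
      omega
  · obtain ⟨h3, h4, h5⟩ := s3 h1
    have := hLi _ h3
    have := hLi _ h4
    have := hLi _ h5
    rw [List.mem_cons] at H
    rcases H with rfl | H
    · omega
    · have := hSi _ H
      omega
  · exact hL _ _ _ _ H

lemma dec2 {D : List ℕ} (hD : D.Pairwise (· > ·)) {a b : ℕ} (h : [a,b].Sublist D) : b < a := by
  simpa using hD.sublist h
lemma dec3 {D : List ℕ} (hD : D.Pairwise (· > ·)) {a b c : ℕ} (h : [a,b,c].Sublist D) :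
    b < a ∧ c < b := by
  have := hD.sublist h
  simp at this
  omega
lemma dec4 {D : List ℕ} (hD : D.Pairwise (· > ·)) {a b c d : ℕ} (h : [a,b,c,d].Sublist D) :
    b < a ∧ c < b ∧ d < c := by
  have := hD.sublist h
  simp at this
  omega

lemma Av_hook1 {i : ℕ} {L E : List ℕ} (hLi : ∀ x ∈ L, x < i) (hEi : ∀ x ∈ E, i ≤ x)
    (hL : Av L) (hE : E.Pairwise (· > ·)) : Av (L ++ E) := by
  intro a b c d H
  rw [sub4_append] at H
  rcases H with H | ⟨h1, H⟩ | ⟨h1, H⟩ | ⟨h1, H⟩ | H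
  · have := dec4 hE H
    omega
  · have := hLi _ h1
    have := dec3 hE H
    have := hEi _ (s3 H).2.2
    omega
  · have := hLi _ (s2 h1).1
    have := hLi _ (s2 h1).2
    have := dec2 hE H
    have := hEi _ (s2 H).2
    omega
  · have := hLi _ (s3 h1).1
    have := hLi _ (s3 h1).2.1
    have := hLi _ (s3 h1).2.2
    have := hEi _ H
    omega
  · exact hL _ _ _ _ H

lemma Av_hook {i : ℕ} {D L E : List ℕ} (hDi : ∀ x ∈ D, i ≤ x)
    (hLi : ∀ x ∈ L, x < i) (hEi : ∀ x ∈ E, i ≤ x)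
    (hL : Av L) (hE : E.Pairwise (· > ·)) (hD : D.Pairwise (· > ·)) : Av (D ++ L ++ E) := by
  rw [List.append_assoc]
  have hA := Av_hook1 hLi hEi hL hE
  intro a b c d H
  rw [sub4_append] at H
  rcases H with H | ⟨h1, H⟩ | ⟨h1, H⟩ | ⟨h1, H⟩ | H
  · exact hA _ _ _ _ H
  · have := hDi _ h1
    rw [sub3_append] at H
    rcases H with H | ⟨h1, H⟩ | ⟨h1, H⟩ | H
    · have := dec3 hE H
      omega
    · have := hLi _ h1
      have := dec2 hE H
      have := hEi _ (s2 H).2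
      omega
    · have := hLi _ (s2 h1).1
      have := hLi _ (s2 h1).2
      have := hEi _ H
      omega
    · have := hLi _ (s3 H).1
      have := hLi _ (s3 H).2.1
      have := hLi _ (s3 H).2.2
      omega
  · have := hDi _ (s2 h1).1
    have := hDi _ (s2 h1).2
    have := dec2 hD h1
    rw [sub2_append] at H
    rcases H with H | ⟨h1, H⟩ | H
    · have := dec2 hE H
      omega
    · have := hLi _ h1
      have := hEi _ H
      omega
    · have := hLi _ (s2 H).1
      have := hLi _ (s2 H).2
      omega
  · have := dec3 hD h1
    omega
  · have := dec4 hD H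
    omega

lemma filter_split {b : ℕ} : ∀ {L : List ℕ}, b ∉ L →
    (∀ a c, [a,c].Sublist L → a < b → b < c → False) →
    L = L.filter (fun x => b < x) ++ L.filter (fun x => x < b)
  | [], _, _ => rfl
  | x :: L, h1, h2 => by
    have ih := filter_split (b := b) (L := L) (fun h => h1 (by simp [h]))
      (fun a c h => h2 a c (h.trans (by simp)))
    have hx : x ≠ b := fun e => h1 (by simp [e])
    by_cases hb : b < x
    · have : ¬ x < b := by omega
      simp only [List.filter_cons, hb, this, decide_true, decide_false, if_true, List.cons_append]
      simp only [Bool.false_eq_true, if_false, ← ih]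
    · have hxb : x < b := by omega
      have hall : ∀ y ∈ L, y < b := by
        intro y hy
        have : y ≠ b := fun e => h1 (by simp [← e, hy])
        by_contra hc
        exact h2 x y (by simp [hy]) hxb (by omega)
      symm
      rw [List.filter_eq_nil_iff.2, List.filter_eq_self.2, List.nil_append]
      · intro y hy
        rw [List.mem_cons] at hy
        rcases hy with rfl | hy
        · simpa using hxb
        · simpa using hall y hy
      · intro y hy
        rw [List.mem_cons] at hy
        rcases hy with rfl | hy
        · simpa using hxb.le
        · simpa using (hall y hy).le

lemma hook_forward {n b : ℕ} {L R : List ℕ} (hP : L ++ n :: (R ++ [b]) ∈ Pm (n+1))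
    (hA : Av (L ++ n :: (R ++ [b]))) (hb : b ≠ 0)
    (hr : ∃ u ∈ L, ∃ r ∈ R ++ [b], r < u) :
    ∃ D M, L = D ++ M ∧ D ≠ [] ∧ (∀ x ∈ D, b < x) ∧ D.Pairwise (· > ·) ∧
      M ∈ Pm b ∧ (R ++ [b]).Pairwise (· > ·) ∧ (∀ x ∈ R ++ [b], b ≤ x) := by
  obtain ⟨hnd, hm⟩ := mem_Pm.1 hP
  rw [List.nodup_append, List.nodup_cons] at hnd
  obtain ⟨hL, ⟨hnR, hR⟩, hd⟩ := hnd
  have hLn : ∀ x ∈ L, x < n := fun x hx => by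
    have h1 := (hm x).1 (by simp [hx])
    have h2 := hd x hx n (by simp)
    omega
  have hRn : ∀ x ∈ R ++ [b], x < n := fun x hx => by
    have h1 := (hm x).1 (List.mem_append_right _ (List.mem_cons_of_mem _ hx))
    have h2 : x ≠ n := fun e => hnR (e ▸ hx)
    omega
  have hRb : ∀ x ∈ R, x ≠ b := fun x hx e => by
    rw [List.nodup_append] at hR
    exact hR.2.2 x hx b (by simp) e
  have hLR : ∀ x ∈ L, ∀ y ∈ R, x ≠ y := fun x hx y hy => hd x hx y (by simp [hy])
  have hLb : ∀ x ∈ L, x ≠ b := fun x hx => hd x hx b (by simp)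
  have key1 : ∀ u ∈ L, ∀ r ∈ R, r < u → b < r := by
    intro u hu r hr hlt
    have q := hA u n r b (by
      have : [n, r, b].Sublist (n :: (R ++ [b])) := by
        rw [List.cons_sublist_cons, sub2_append]
        exact Or.inr (Or.inl ⟨hr, by simp⟩)
      simpa using (List.singleton_sublist.2 hu).append this)
    have := hRb r hr
    have := hLb u hu
    have := hLn u hu
    have := hRn b (by simp)
    omega
  obtain ⟨u, hu, r, hr, hru⟩ := hr
  have hub : b < u := by
    rw [List.mem_append, List.mem_singleton] at hr
    rcases hr with hr | rfl
    · have := key1 u hu r hr hru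
      omega
    · exact hru
  have hRge : ∀ x ∈ R, b < x := by
    intro x hx
    by_contra hc
    have := hRb x hx
    exact hc (key1 u hu x hx (by omega))
  have h0 : 0 ∈ L := by
    have h := (hm 0).2 (by omega)
    have := hLn u hu
    simp only [List.mem_append, List.mem_cons] at h
    rcases h with h | h | h | h | h
    · exact h
    · omega
    · have := hRge _ h
      omega
    · omega
    · simp at h
  have hsp : ∀ a c, [a,c].Sublist L → a < b → b < c → False := by
    intro a c h h1 h2
    have q := hA a c n b (by
      have : [n, b].Sublist (n :: (R ++ [b])) := by simp
      simpa using h.append this)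
    have := hLn c (s2 h).2
    omega
  have hfs := filter_split (fun h => hLb b h rfl) hsp
  have hMem : ∀ x < b, x ∈ L := by
    intro x hx
    have h := (hm x).2 (by have := hRn b (by simp); omega)
    have := hRn b (by simp)
    simp only [List.mem_append, List.mem_cons] at h
    rcases h with h | h | h | h | h
    · exact h
    · omega
    · have := hRge _ h
      omega
    · omega
    · simp at h
  refine ⟨_, _, hfs, ?_, ?_, ?_, ?_, ?_, ?_⟩
  · have : u ∈ L.filter (fun x => b < x) := by simp [hu, hub]
    exact List.ne_nil_of_mem this
  · intro x hx
    simpa using (List.mem_filter.1 hx).2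
  · rw [List.pairwise_iff_forall_sublist]
    intro a c h
    have hac : a ≠ c := by
      have := (hL.sublist (List.filter_sublist (p := fun x => decide (b < x)))).sublist h
      simpa using this
    have h1 : b < a := by simpa using (List.mem_filter.1 (s2 h).1).2
    have h2 : b < c := by simpa using (List.mem_filter.1 (s2 h).2).2
    have h00 : 0 ∈ L.filter (fun x => x < b) := by simp [h0]; omega
    have q := hA a c 0 b (by
      have h3 : [a, c, 0].Sublist L := by
        rw [hfs]
        simpa using h.append (List.singleton_sublist.2 h00)
      have : [b].Sublist (n :: (R ++ [b])) := by simp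
      simpa using h3.append this)
    simp only [gt_iff_lt]
    omega
  · rw [mem_Pm]
    refine ⟨hL.sublist List.filter_sublist, fun x => ?_⟩
    rw [List.mem_filter]
    constructor
    · intro h
      simpa using h.2
    · intro h
      exact ⟨hMem x h, by simpa using h⟩
  · rw [List.pairwise_append]
    refine ⟨?_, by simp, ?_⟩
    · rw [List.pairwise_iff_forall_sublist]
      intro a c h
      have hac : a ≠ c := by
        have := hR.sublist (h.trans (List.sublist_append_left _ _))
        simpa using this
      have h1 := hRge a (s2 h).1
      have q := hA 0 a c b (by
        have : [a, c, b].Sublist (n :: (R ++ [b])) := by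
          simpa using (h.append (List.Sublist.refl [b])).trans (List.sublist_cons_self n _)
        simpa using (List.singleton_sublist.2 h0).append this)
      simp only [gt_iff_lt]
      omega
    · intro x hx y hy
      rw [List.mem_singleton] at hy
      subst hy
      exact hRge x hx
  · intro x hx
    rw [List.mem_append, List.mem_singleton] at hx
    rcases hx with hx | rfl
    · exact (hRge x hx).le
    · exact le_rfl

open Classical in
noncomputable def QF (n : ℕ) : Finset (List ℕ) :=
  (AF n).filter (fun l => ∃ m L R, n = m + 1 ∧ L ≠ [] ∧ l = L ++ m :: R)
noncomputable def AP (n : ℕ) : Finset (List ℕ) := if n = 0 then ∅ else AF n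

lemma mem_QF {n : ℕ} {l : List ℕ} : l ∈ QF n ↔ (l ∈ Pm n ∧ Av l) ∧
    ∃ m L R, n = m + 1 ∧ L ≠ [] ∧ l = L ++ m :: R := by simp [QF, mem_AF]
lemma mem_AP {n : ℕ} {l : List ℕ} : l ∈ AP n ↔ n ≠ 0 ∧ l ∈ Pm n ∧ Av l := by
  unfold AP
  split_ifs with h <;> simp [h, mem_AF]

/-- facts on the split at the maximum -/
lemma max_facts {n : ℕ} {L R : List ℕ} (h : L ++ n :: R ∈ Pm (n+1)) :
    (∀ x ∈ L, x < n) ∧ (∀ x ∈ R, x < n) ∧ (∀ x ∈ L, ∀ y ∈ R, x ≠ y) ∧ L.Nodup ∧ R.Nodup := by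
  obtain ⟨hnd, hm⟩ := mem_Pm.1 h
  rw [List.nodup_append, List.nodup_cons] at hnd
  obtain ⟨hL, ⟨hnR, hR⟩, hd⟩ := hnd
  refine ⟨fun x hx => ?_, fun x hx => ?_, fun x hx y hy => hd x hx y (by simp [hy]), hL, hR⟩
  · have h1 := (hm x).1 (by simp [hx])
    have h2 := hd x hx n (by simp)
    omega
  · have h1 := (hm x).1 (by simp [hx])
    have h2 : x ≠ n := fun e => hnR (e ▸ hx)
    omega

lemma card_AF_succ (n : ℕ) : (AF (n+1)).card = (AF n).card + (QF (n+1)).card := by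
  have hU : AF (n+1) = (AF n).image (n :: ·) ∪ QF (n+1) := by
    ext l
    rw [Finset.mem_union, Finset.mem_image, mem_QF, mem_AF]
    constructor
    · rintro ⟨h1, h2⟩
      obtain ⟨L, R, rfl⟩ := List.append_of_mem (((mem_Pm.1 h1).2 n).2 (by omega))
      by_cases hL : L = []
      · left
        subst hL
        obtain ⟨-, h3, -, -, h4⟩ := max_facts h1
        refine ⟨R, mem_AF.2 ⟨mem_Pm.2 ⟨h4, fun x => ⟨h3 x, fun hx => ?_⟩⟩, h2.sub (by simp)⟩, rfl⟩
        have := ((mem_Pm.1 h1).2 x).2 (by omega)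
        simp at this
        rcases this with h | h
        · omega
        · exact h
      · right
        exact ⟨⟨h1, h2⟩, n, L, R, rfl, hL, rfl⟩
    · rintro (⟨R, hR, rfl⟩ | h)
      · obtain ⟨h1, h2⟩ := mem_AF.1 hR
        obtain ⟨h3, h4⟩ := mem_Pm.1 h1
        refine ⟨mem_Pm.2 ⟨?_, ?_⟩, Av_cons (fun x hx => (h4 x).1 hx) h2⟩
        · rw [List.nodup_cons]
          exact ⟨by rw [h4]; omega, h3⟩
        · intro x
          rw [List.mem_cons, h4]
          omega
      · exact h.1
  rw [hU, Finset.card_union_of_disjoint, Finset.card_image_of_injective _ (List.cons_injective)]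
  rw [Finset.disjoint_left]
  intro l h1 h2
  rw [Finset.mem_image] at h1
  obtain ⟨R, hR, rfl⟩ := h1
  obtain ⟨⟨h1, h2⟩, m, L, R', hm, hL, e⟩ := mem_QF.1 h2
  obtain rfl : n = m := by omega
  rw [e] at h1
  have hm := (max_facts h1).1
  cases L with
  | nil => exact hL rfl
  | cons x L =>
    simp only [List.cons_append, List.cons.injEq] at e
    have := hm x (by simp)
    omega

noncomputable def sd (S : Finset ℕ) : List ℕ := S.sort (· ≥ ·)
lemma mem_sd {S x} : x ∈ sd S ↔ x ∈ S := by simp [sd]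
lemma sd_nodup (S) : (sd S).Nodup := Finset.sort_nodup _ _
lemma sd_pw (S) : (sd S).Pairwise (· > ·) := (Finset.sortedGT_sort S).pairwise
lemma sd_inj {S S'} (h : sd S = sd S') : S = S' := by
  ext x
  rw [← mem_sd, h, mem_sd]
lemma eq_sd {D : List ℕ} (h : D.Pairwise (· > ·)) : D = sd D.toFinset := by
  have hn : D.Nodup := h.imp (fun h => by simp at h; omega)
  exact ((List.toFinset_sort (· ≥ ·) hn).2 (h.imp (fun h => by simp at h ⊢; omega))).symm

noncomputable def Hook (m : ℕ) : Finset (List ℕ) :=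
  ((Finset.HasAntidiagonal.antidiagonal m).sigma
    (fun p => AP p.1 ×ˢ ((Finset.Ico (p.1+1) (m+1)).powerset.erase ∅))).image
    (fun s => (sd s.2.2 ++ s.2.1) ++ (m+1) :: sd (Finset.Ico s.1.1 (m+1) \ s.2.2))

lemma mem_Hook {m : ℕ} {l : List ℕ} : l ∈ Hook m ↔
    ∃ i j M S, i + j = m ∧ M ∈ AP i ∧ S ≠ ∅ ∧ S ⊆ Finset.Ico (i+1) (m+1) ∧
      l = (sd S ++ M) ++ (m+1) :: sd (Finset.Ico i (m+1) \ S) := by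
  simp only [Hook, Finset.mem_image, Finset.mem_sigma, Finset.HasAntidiagonal.mem_antidiagonal,
    Finset.mem_product, Finset.mem_erase, Finset.mem_powerset]
  constructor
  · rintro ⟨⟨⟨i, j⟩, ⟨L, R⟩⟩, ⟨h1, h2, h3, h4⟩, rfl⟩
    exact ⟨i, j, L, R, h1, h2, h3, h4, rfl⟩
  · rintro ⟨i, j, L, R, h1, h2, h3, h4, rfl⟩
    exact ⟨⟨⟨i, j⟩, ⟨L, R⟩⟩, ⟨h1, h2, h3, h4⟩, rfl⟩

lemma hook_Pm {m i : ℕ} {M : List ℕ} {S : Finset ℕ} (him : i ≤ m) (hM : M ∈ Pm i)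
    (hS : S ⊆ Finset.Ico (i+1) (m+1)) :
    (sd S ++ M) ++ (m+1) :: sd (Finset.Ico i (m+1) \ S) ∈ Pm (m+2) := by
  obtain ⟨h1, h2⟩ := mem_Pm.1 hM
  have hS' : ∀ x ∈ S, i + 1 ≤ x ∧ x < m + 1 := fun x hx => Finset.mem_Ico.1 (hS hx)
  rw [mem_Pm]
  constructor
  · rw [List.nodup_append, List.nodup_cons, List.nodup_append]
    refine ⟨⟨sd_nodup _, h1, ?_⟩, ⟨?_, sd_nodup _⟩, ?_⟩
    · intro a ha b hb
      rw [mem_sd] at ha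
      have := hS' a ha
      have := (h2 b).1 hb
      omega
    · rw [mem_sd]
      simp
    · intro a ha b hb
      simp only [List.mem_append, List.mem_cons, mem_sd, Finset.mem_sdiff, Finset.mem_Ico, h2] at ha hb
      rintro rfl
      rcases ha with ha | ha
      · have := hS' a ha
        rcases hb with hb | hb
        · omega
        · exact hb.2 ha
      · omega
  · intro x
    simp only [List.mem_append, List.mem_cons, mem_sd, Finset.mem_sdiff, Finset.mem_Ico, h2]
    have := hS' x
    by_cases hx : x ∈ S
    · simp only [hx, true_or, true_iff]
      have := hS' x hx
      omega
    · simp only [hx, false_or, not_false_eq_true, and_true]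
      omega

lemma card_Hook (m : ℕ) : (Hook m).card =
    ∑ p ∈ Finset.HasAntidiagonal.antidiagonal m, (AP p.1).card * (2 ^ p.2 - 1) := by
  rw [Hook, Finset.card_image_of_injOn, Finset.card_sigma]
  · apply Finset.sum_congr rfl
    rintro ⟨i, j⟩ h
    rw [Finset.HasAntidiagonal.mem_antidiagonal] at h
    simp only at h ⊢
    rw [Finset.card_product, Finset.card_erase_of_mem (by simp), Finset.card_powerset, Nat.card_Ico]
    congr 4
    omega
  · rintro ⟨⟨i, j⟩, ⟨M, S⟩⟩ h1 ⟨⟨i', j'⟩, ⟨M', S'⟩⟩ h2 h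
    simp only [Finset.coe_sigma, Set.mem_sigma_iff, Finset.mem_coe,
      Finset.HasAntidiagonal.mem_antidiagonal,
      Finset.mem_product, Finset.mem_erase, Finset.mem_powerset, mem_AP] at h1 h2 h
    obtain ⟨e1, ⟨a1, a2, a3⟩, a4, a5⟩ := h1
    obtain ⟨e2, ⟨b1, b2, b3⟩, b4, b5⟩ := h2
    have f1 := max_facts (hook_Pm (by omega) a2 a5)
    obtain ⟨h3, -, h4⟩ := (List.append_cons_inj_of_notMem
      (fun hh => lt_irrefl _ (f1.1 _ hh)) (fun hh => lt_irrefl _ (f1.2.1 _ hh))).1 h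
    have h5 := sd_inj h4
    have hi : i ∈ Finset.Ico i (m+1) \ S := by
      rw [Finset.mem_sdiff, Finset.mem_Ico]
      refine ⟨by omega, fun hh => ?_⟩
      have := Finset.mem_Ico.1 (a5 hh)
      omega
    have hi' : i' ∈ Finset.Ico i' (m+1) \ S' := by
      rw [Finset.mem_sdiff, Finset.mem_Ico]
      refine ⟨by omega, fun hh => ?_⟩
      have := Finset.mem_Ico.1 (b5 hh)
      omega
    rw [h5, Finset.mem_sdiff, Finset.mem_Ico] at hi
    rw [← h5, Finset.mem_sdiff, Finset.mem_Ico] at hi'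
    obtain rfl : i = i' := by omega
    obtain rfl : j = j' := by omega
    obtain ⟨h6, rfl⟩ := List.append_inj' h3 (by rw [len_Pm a2, len_Pm b2])
    have := sd_inj h6
    subst this
    rfl

lemma last_ne {P R X : List ℕ} {n : ℕ} (h0 : 0 ∈ P)
    (e : P ++ n :: R = X.map (· + 1) ++ [0]) : False := by
  have := congrArg List.dropLast e
  rw [List.dropLast_append_of_ne_nil (by simp), List.dropLast_concat] at this
  have h : 0 ∈ X.map (· + 1) := by
    rw [← this]
    simp [h0]
  simp at h

lemma pm_zero {n : ℕ} {l : List ℕ} (h : l ∈ Pm n) (hn : n ≠ 0) : 0 ∈ l :=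
  ((mem_Pm.1 h).2 0).2 (by omega)

lemma QF_succ (m : ℕ) : QF (m+2) =
    ((QF (m+1)).image (fun l => l.map (· + 1) ++ [0]) ∪ Glue AP CF (m+1)) ∪ Hook m := by
  ext l
  rw [Finset.mem_union, Finset.mem_union, Finset.mem_image, mem_Glue, mem_Hook, mem_QF]
  constructor
  · rintro ⟨⟨hP, hA⟩, k, L, R, hk, hL, rfl⟩
    obtain rfl : k = m + 1 := by omega
    obtain ⟨hLn, hRn, hd, hLd, hRd⟩ := max_facts hP
    obtain ⟨u, hu⟩ := List.exists_mem_of_ne_nil L hL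
    by_cases hlt : ∀ x ∈ L, ∀ y ∈ R, x < y
    · left; right
      obtain ⟨i, j, R', e, h1, h2, rfl⟩ := split_Pm hP hlt
      refine ⟨i, j, L, R', e, mem_AP.2 ⟨?_, h1, hA.sub (by simp)⟩, mem_CF.2 ⟨h2, ?_⟩, rfl⟩
      · rintro rfl
        have := ((mem_Pm.1 h1).2 u).1 hu
        omega
      · rw [← A231_map (addmono i)]
        intro a b c H hc
        have q := hA u a b c (by
          simpa using (List.singleton_sublist.2 hu).append
            (H.trans (List.sublist_cons_self (m+1) _)))
        have := hlt u hu c (s3 H).2.2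
        omega
    · push Not at hlt
      obtain ⟨x, hx, y, hy, hxy⟩ := hlt
      have hyx : y < x := lt_of_le_of_ne hxy (hd x hx y hy).symm
      obtain rfl | ⟨R, b, rfl⟩ := List.eq_nil_or_concat' R
      · simp at hy
      by_cases hb : b = 0
      · subst hb
        left; left
        have hpos : ∀ z ∈ L ++ (m+1) :: R, 0 < z := by
          have hnd := (mem_Pm.1 hP).1
          have : L ++ (m+1) :: (R ++ [0]) = (L ++ (m+1) :: R) ++ [0] := by simp
          rw [this, List.nodup_append] at hnd
          intro z hz
          have := hnd.2.2 z hz 0 (by simp)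
          omega
        have he : L ++ (m+1) :: R = ((L ++ (m+1) :: R).map (· - 1)).map (· + 1) := by
          rw [List.map_map]
          conv_lhs => rw [← List.map_id (L ++ (m+1) :: R)]
          apply List.map_congr_left
          intro y hy
          have := hpos y hy
          simp only [Function.comp, id]
          omega
        refine ⟨(L ++ (m+1) :: R).map (· - 1), ?_, ?_⟩
        · rw [mem_QF]
          refine ⟨⟨?_, ?_⟩, m, L.map (· - 1), R.map (· - 1), rfl, by simpa using hL, by simp⟩
          · rw [mem_Pm]
            constructor
            · apply List.Nodup.of_map (· + 1)
              rw [← he]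
              exact (mem_Pm.1 hP).1.sublist (by simp)
            · intro x
              have hm := (mem_Pm.1 hP).2
              rw [List.mem_map]
              constructor
              · rintro ⟨z, hz, rfl⟩
                have := hpos z hz
                have := (hm z).1 (by
                  simp only [List.mem_append, List.mem_cons] at hz ⊢
                  tauto)
                omega
              · intro hx
                refine ⟨x + 1, ?_, by omega⟩
                have := (hm (x+1)).2 (by omega)
                simp only [List.mem_append, List.mem_cons] at this ⊢
                simp at this
                tauto
          · rw [← Av_map (addmono 1)]
            rw [← he]
            exact hA.sub (by simp)
        · rw [← he]
          simp
      · right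
        obtain ⟨D, M, rfl, h1, h2, h3, h4, h5, h6⟩ := hook_forward hP hA hb ⟨x, hx, y, hy, hyx⟩
        have hbn : b < m + 1 := hRn b (by simp)
        refine ⟨b, m - b, M, D.toFinset, by omega, mem_AP.2 ⟨hb, h4, hA.sub ?_⟩, ?_, ?_, ?_⟩
        · simp
        · simpa using h1
        · intro z hz
          rw [List.mem_toFinset] at hz
          have := h2 z hz
          have := hLn z (by simp [hz])
          rw [Finset.mem_Ico]
          omega
        · rw [← eq_sd h3]
          congr 2
          rw [eq_sd h5]
          congr 1
          ext z
          rw [List.mem_toFinset, Finset.mem_sdiff, Finset.mem_Ico, List.mem_toFinset]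
          constructor
          · intro hz
            refine ⟨⟨h6 z hz, hRn z hz⟩, fun hz' => hd z (by simp [hz']) z hz rfl⟩
          · rintro ⟨⟨hz1, hz2⟩, hz3⟩
            have := ((mem_Pm.1 hP).2 z).2 (by omega)
            rw [List.mem_append, List.mem_append, List.mem_cons, (mem_Pm.1 h4).2] at this
            rcases this with (h | h) | h | h
            · exact absurd h hz3
            · omega
            · omega
            · exact h
  · rintro ((⟨Y, hY, rfl⟩ | ⟨i, j, L, R, e, h1, h2, rfl⟩) | ⟨i, j, M, S, e, h1, h2, h3, rfl⟩)
    · obtain ⟨⟨hP, hA⟩, k, L, R, hk, hL, rfl⟩ := mem_QF.1 hY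
      refine ⟨⟨?_, Av_snoc ((Av_map (addmono 1)).2 hA)⟩, m+1, L.map (· + 1), R.map (· + 1) ++ [0],
        rfl, by simpa using hL, ?_⟩
      · obtain ⟨h1, h2⟩ := mem_Pm.1 hP
        rw [mem_Pm]
        constructor
        · rw [List.nodup_append]
          refine ⟨h1.map (addmono 1).injective, by simp, ?_⟩
          intro a ha b hb
          rw [List.mem_map] at ha
          rw [List.mem_singleton] at hb
          omega
        · intro x
          rw [List.mem_append, List.mem_map, List.mem_singleton]
          constructor
          · rintro (⟨y, hy, rfl⟩ | rfl)
            · have := (h2 y).1 hy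
              omega
            · omega
          · intro hx
            by_cases h0 : x = 0
            · exact Or.inr h0
            · exact Or.inl ⟨x - 1, (h2 _).2 (by omega), by omega⟩
      · obtain rfl : m = k := by omega
        simp
    · rw [mem_AP] at h1
      rw [mem_CF] at h2
      rw [← e]
      refine ⟨⟨by rw [show m + 2 = i + j + 1 by omega]; exact glue_Pm h1.2.1 h2.1, ?_⟩,
        i + j, L, _, by omega, ?_, rfl⟩
      · apply Av_glue (i := i) (by omega) _ _ h1.2.2 ((A231_map (addmono i)).2 h2.2)
        · intro x hx
          exact ((mem_Pm.1 h1.2.1).2 x).1 hx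
        · intro x hx
          simp only [List.mem_map, (mem_Pm.1 h2.1).2] at hx
          omega
      · exact List.ne_nil_of_mem (pm_zero h1.2.1 h1.1)
    · rw [mem_AP] at h1
      refine ⟨⟨hook_Pm (by omega) h1.2.1 h3, ?_⟩, m + 1, _, _, by omega, ?_, rfl⟩
      · apply Av_hook (i := i) _ _ _ h1.2.2 _ (sd_pw _)
        · intro x hx
          have := Finset.mem_Ico.1 (h3 (mem_sd.1 hx))
          omega
        · intro x hx
          exact ((mem_Pm.1 h1.2.1).2 x).1 hx
        · intro x hx
          rw [List.mem_cons, mem_sd, Finset.mem_sdiff, Finset.mem_Ico] at hx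
          omega
        · rw [List.pairwise_cons]
          refine ⟨?_, sd_pw _⟩
          intro x hx
          rw [mem_sd, Finset.mem_sdiff, Finset.mem_Ico] at hx
          simp only [gt_iff_lt]
          omega
      · exact List.ne_nil_of_mem (List.mem_append_right _ (pm_zero h1.2.1 h1.1))

lemma AP_sub (i : ℕ) : AP i ⊆ Pm i := fun _ h => (mem_AP.1 h).2.1
lemma CF_sub (i : ℕ) : CF i ⊆ Pm i := fun _ h => (mem_CF.1 h).1

lemma card_QF_succ (m : ℕ) : (QF (m+2)).card = (QF (m+1)).card +
    ∑ p ∈ Finset.HasAntidiagonal.antidiagonal (m+1), (AP p.1).card * catalan p.2 +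
    ∑ p ∈ Finset.HasAntidiagonal.antidiagonal m, (AP p.1).card * (2 ^ p.2 - 1) := by
  rw [QF_succ, Finset.card_union_of_disjoint, Finset.card_union_of_disjoint, card_Hook,
    card_Glue AP_sub CF_sub, Finset.card_image_of_injective]
  · simp only [card_CF]
  · intro a b h
    have := List.append_cancel_right h
    exact List.map_injective_iff.2 (addmono 1).injective this
  · rw [Finset.disjoint_left]
    intro l h1 h2
    obtain ⟨X, _, rfl⟩ := Finset.mem_image.1 h1
    obtain ⟨i, j, L, R, e, h3, h4, h5⟩ := mem_Glue.1 h2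
    rw [mem_AP] at h3
    exact last_ne (pm_zero h3.2.1 h3.1) h5.symm
  · rw [Finset.disjoint_left]
    intro l h1 h2
    obtain ⟨i, j, M, S, e, h3, h4, h5, h6⟩ := mem_Hook.1 h2
    rw [mem_AP] at h3
    rcases Finset.mem_union.1 h1 with h1 | h1
    · obtain ⟨X, _, rfl⟩ := Finset.mem_image.1 h1
      exact last_ne (List.mem_append_right _ (pm_zero h3.2.1 h3.1)) h6.symm
    · obtain ⟨i', j', L, R, e', h3', h4', h5'⟩ := mem_Glue.1 h1
      rw [mem_AP] at h3'
      rw [mem_CF] at h4'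
      have f1 := max_facts (hook_Pm (by omega) h3.2.1 h5)
      rw [h6] at h5'
      obtain ⟨rfl, -, h7⟩ := (List.append_cons_inj_of_notMem
        (fun hh => lt_irrefl _ (f1.1 _ hh)) (fun hh => lt_irrefl _ (f1.2.1 _ hh))).1 h5'
      obtain ⟨u, hu⟩ := Finset.nonempty_iff_ne_empty.2 h4
      have hu1 := Finset.mem_Ico.1 (h5 hu)
      have hu2 := ((mem_Pm.1 h3'.2.1).2 u).1 (List.mem_append_left _ (mem_sd.2 hu))
      have hi : i ∈ sd (Finset.Ico i (m+1) \ S) := by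
        rw [mem_sd, Finset.mem_sdiff, Finset.mem_Ico]
        refine ⟨by omega, fun hh => ?_⟩
        have := Finset.mem_Ico.1 (h5 hh)
        omega
      rw [h7, List.mem_map] at hi
      omega

lemma card_QF_one : (QF 1).card = 0 := by
  rw [Finset.card_eq_zero, Finset.eq_empty_iff_forall_notMem]
  intro l hl
  obtain ⟨⟨hP, hA⟩, k, L, R, hk, hL, rfl⟩ := mem_QF.1 hl
  obtain rfl : k = 0 := by omega
  obtain ⟨u, hu⟩ := List.exists_mem_of_ne_nil L hL
  have := (max_facts hP).1 u hu
  omega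

lemma sub4_ofFn {n : ℕ} {g : Fin n → ℕ} {a b c d : ℕ} : [a,b,c,d].Sublist (List.ofFn g) ↔
    ∃ i j k m : Fin n, i < j ∧ j < k ∧ k < m ∧ g i = a ∧ g j = b ∧ g k = c ∧ g m = d := by
  constructor
  · intro h
    obtain ⟨f, hf⟩ := List.sublist_iff_exists_fin_orderEmbedding_get_eq.1 h
    have hl : (List.ofFn g).length = n := List.length_ofFn
    have e : ∀ x : Fin 4, [a,b,c,d].get x = g (Fin.cast hl (f x)) := by
      intro x
      rw [hf x]
      simp
      rfl
    have hlt : ∀ x y : Fin 4, x < y → Fin.cast hl (f x) < Fin.cast hl (f y) := by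
      intro x y hxy
      have := f.lt_iff_lt.2 hxy
      simpa using this
    exact ⟨_, _, _, _, hlt 0 1 (by decide), hlt 1 2 (by decide), hlt 2 3 (by decide),
      (e 0).symm, (e 1).symm, (e 2).symm, (e 3).symm⟩
  · rintro ⟨i, j, k, m, h1, h2, h3, rfl, rfl, rfl, rfl⟩
    have : [g i, g j, g k, g m] = [i, j, k, m].map g := rfl
    rw [this, List.ofFn_eq_map]
    apply List.Sublist.map
    apply List.sublist_of_subperm_of_pairwise (r := (· < ·))
    · apply List.subperm_of_subset
      · simp
        omega
      · intro x _
        simp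
    · simp
      omega
    · exact List.pairwise_lt_finRange n

lemma contains_iff {n : ℕ} {π : Equiv.Perm (Fin n)} {σ : Fin 4 → Fin 4} :
    ContainsPattern π σ ↔ ∃ i j k m : Fin n, i < j ∧ j < k ∧ k < m ∧
      ∀ a b : Fin 4, σ a < σ b ↔ π (![i,j,k,m] a) < π (![i,j,k,m] b) := by
  constructor
  · rintro ⟨f, hf⟩
    refine ⟨f 0, f 1, f 2, f 3, by simp, by simp, by simp, fun a b => ?_⟩
    rw [hf]
    have : ∀ x, ![f 0, f 1, f 2, f 3] x = f x := by
      intro x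
      fin_cases x <;> rfl
    rw [this, this]
  · rintro ⟨i, j, k, m, h1, h2, h3, h⟩
    have hs : StrictMono ![i,j,k,m] := by
      rw [Fin.strictMono_iff_lt_succ]
      intro x
      fin_cases x
      · exact h1
      · exact h2
      · exact h3
    exact ⟨OrderEmbedding.ofStrictMono _ hs, fun a b => h a b⟩

lemma av_iff {n : ℕ} (π : Equiv.Perm (Fin n)) :
    (∀ σ ∈ ({![0,2,3,1], ![1,3,0,2], ![2,3,0,1]} : Set (Fin 4 → Fin 4)), ¬ ContainsPattern π σ) ↔
      Av (List.ofFn (fun i => (π i : ℕ))) := by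
  simp only [Set.mem_insert_iff, Set.mem_singleton_iff, forall_eq_or_imp, forall_eq, contains_iff,
    Av, sub4_ofFn]
  constructor
  · rintro ⟨h1, h2, h3⟩ a b c d ⟨i, j, k, m, l1, l2, l3, rfl, rfl, rfl, rfl⟩
    refine ⟨fun q => h1 ⟨i, j, k, m, l1, l2, l3, ?_⟩, fun q => h2 ⟨i, j, k, m, l1, l2, l3, ?_⟩,
      fun q => h3 ⟨i, j, k, m, l1, l2, l3, ?_⟩⟩ <;>
    · intro a b
      fin_cases a <;> fin_cases b <;> simp <;> simp only [Fin.lt_def, Fin.le_def] <;> omega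
  · intro h
    refine ⟨?_, ?_, ?_⟩
    · rintro ⟨i, j, k, m, l1, l2, l3, q⟩
      refine (h _ _ _ _ ⟨i, j, k, m, l1, l2, l3, rfl, rfl, rfl, rfl⟩).1 ⟨?_, ?_, ?_⟩
      · exact (q 0 3).1 (by decide)
      · exact (q 3 1).1 (by decide)
      · exact (q 1 2).1 (by decide)
    · rintro ⟨i, j, k, m, l1, l2, l3, q⟩
      refine (h _ _ _ _ ⟨i, j, k, m, l1, l2, l3, rfl, rfl, rfl, rfl⟩).2.1 ⟨?_, ?_, ?_⟩
      · exact (q 2 0).1 (by decide)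
      · exact (q 0 3).1 (by decide)
      · exact (q 3 1).1 (by decide)
    · rintro ⟨i, j, k, m, l1, l2, l3, q⟩
      refine (h _ _ _ _ ⟨i, j, k, m, l1, l2, l3, rfl, rfl, rfl, rfl⟩).2.2 ⟨?_, ?_, ?_⟩
      · exact (q 2 3).1 (by decide)
      · exact (q 3 0).1 (by decide)
      · exact (q 0 1).1 (by decide)

lemma count_eq (n : ℕ) :
    avoiderCount ({![0,2,3,1], ![1,3,0,2], ![2,3,0,1]} : Set (Fin 4 → Fin 4)) n = (AF n).card := by
  classical
  let f : Equiv.Perm (Fin n) → List ℕ := fun π => List.ofFn (fun i => (π i : ℕ))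
  have hf : Function.Injective f := by
    intro π ρ h
    have := List.ofFn_injective h
    ext i
    exact congrFun this i
  have him : Finset.univ.image f = Pm n := by
    apply Finset.eq_of_subset_of_card_le
    · intro l hl
      obtain ⟨π, -, rfl⟩ := Finset.mem_image.1 hl
      rw [mem_Pm]
      constructor
      · rw [List.nodup_ofFn]
        intro i j h
        exact π.injective (Fin.ext h)
      · intro x
        simp only [f, List.mem_ofFn]
        constructor
        · rintro ⟨i, rfl⟩
          exact (π i).2
        · intro hx
          exact ⟨π.symm ⟨x, hx⟩, by simp⟩
    · rw [Finset.card_image_of_injective _ hf, card_Pm, Finset.card_univ, Fintype.card_perm,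
        Fintype.card_fin]
  rw [avoiderCount, Nat.card_eq_fintype_card, Fintype.card_subtype, ← Finset.card_image_of_injective _ hf]
  congr 1
  ext l
  rw [mem_AF, ← him]
  simp only [Finset.mem_image, Finset.mem_filter, Finset.mem_univ, true_and, av_iff]
  constructor
  · rintro ⟨π, h, rfl⟩
    exact ⟨⟨π, rfl⟩, h⟩
  · rintro ⟨⟨π, rfl⟩, h⟩
    exact ⟨π, h, rfl⟩

lemma card_AF_zero : (AF 0).card = 1 := by
  rw [Finset.card_eq_one]
  refine ⟨[], ?_⟩
  ext l
  rw [mem_AF, Finset.mem_singleton]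
  constructor
  · intro h
    simpa using len_Pm h.1
  · rintro rfl
    exact ⟨by simp [mem_Pm], fun a b c d h => by simp at h⟩

noncomputable def GA : PowerSeries ℚ := PowerSeries.mk fun n => ((AP n).card : ℚ)
noncomputable def GQ : PowerSeries ℚ := PowerSeries.mk fun n => if n = 0 then 0 else ((QF n).card : ℚ)
noncomputable def GW : PowerSeries ℚ := PowerSeries.mk fun n => (((2 ^ n - 1 : ℕ)) : ℚ)

lemma GF_eq : avoiderGF ({![0,2,3,1], ![1,3,0,2], ![2,3,0,1]} : Set (Fin 4 → Fin 4)) = 1 + GA := by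
  ext n
  cases n with
  | zero => simp [avoiderGF, GA, count_eq, card_AF_zero, AP]
  | succ n => simp [avoiderGF, GA, count_eq, AP, PowerSeries.coeff_one]

lemma GA_eq : GA = X * (1 + GA) + GQ := by
  rw [← GF_eq]
  ext n
  cases n with
  | zero => simp [GA, GQ, AP]
  | succ n =>
    rw [map_add, PowerSeries.coeff_succ_X_mul]
    simp [avoiderGF, GA, GQ, count_eq, AP, card_AF_succ]

lemma GQ_eq : GQ = X * (GQ + GA * catalanGF + X * (GA * GW)) := by
  ext n
  match n with
  | 0 => simp [GQ]
  | 1 =>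
    rw [PowerSeries.coeff_succ_X_mul]
    simp [GQ, GA, card_QF_one, AP]
  | m + 2 =>
    rw [PowerSeries.coeff_succ_X_mul, map_add, map_add, PowerSeries.coeff_succ_X_mul,
      PowerSeries.coeff_mul, PowerSeries.coeff_mul]
    simp only [GQ, GA, GW, catalanGF, PowerSeries.coeff_mk, card_QF_succ]
    simp

lemma GW_eq : GW * ((1 - X) * (1 - 2 * X)) = X := by
  have h1 : GW * (1 - X) = X * (PowerSeries.mk fun n => (2:ℚ) ^ n) := by
    ext n
    cases n with
    | zero => simp [GW]
    | succ n =>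
      rw [mul_sub, mul_one, map_sub, mul_comm GW X, PowerSeries.coeff_succ_X_mul,
        PowerSeries.coeff_succ_X_mul]
      simp [GW, PowerSeries.coeff_mk, Nat.cast_sub Nat.one_le_two_pow]
      ring
  have h2 : (PowerSeries.mk fun n => (2:ℚ) ^ n) * (1 - 2 * X) = 1 := by
    ext n
    have e : (PowerSeries.mk fun n => (2:ℚ) ^ n) * (1 - 2 * X) =
      (PowerSeries.mk fun n => (2:ℚ) ^ n) - X * ((PowerSeries.mk fun n => (2:ℚ) ^ n) +
        (PowerSeries.mk fun n => (2:ℚ) ^ n)) := by ring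
    rw [e]
    cases n with
    | zero => simp
    | succ n =>
      rw [map_sub, PowerSeries.coeff_succ_X_mul, map_add]
      simp [PowerSeries.coeff_one]
      ring
  rw [← mul_assoc, h1, mul_assoc, h2, mul_one]

theorem statement_18 :
    (((X : PowerSeries ℚ)^2 - 3*X + 1) * (2*X^2 - 2*X + 1) - X * (1 - 2*X) * (1 - X) * catalanGF)
        * (avoiderGF ({![0,2,3,1], ![1,3,0,2], ![2,3,0,1]} : Set (Fin 4 → Fin 4)) - 1) =
      X * (1 - X)^2 * (1 - 2*X) := by
  rw [GF_eq, add_sub_cancel_left]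
  have h1 := GA_eq
  have h2 := GQ_eq
  have h3 := GW_eq
  generalize GA = A at *
  generalize GQ = Q at *
  generalize GW = W at *
  generalize catalanGF = C at *
  generalize (X : PowerSeries ℚ) = x at *
  linear_combination ((1-x)^2*(1-2*x)) * h1 + ((1-x)*(1-2*x)) * h2 + (x^2*A) * h3
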